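/- arXiv:math/0606675 — 2 statements merged into one kernel-verified Lean document; each statement's English description precedes it below -/
import Mathlib

section
/- Let n ≥ 1, k ≥ 1 and let Ω ⊂ ℝ^{n+1} be a bounded open set. Then there exists a constant C, depending only on n, k and the diameter of Ω, such that for every ε ∈ (0,1] and every solution u of the regularised level-set equation (★★)_ε on Ω one has sup_Ω |u| ≤ C. -/
open MeasureTheory Metric Set

/-- The divergence of a vector field `F` on `ℝ^{n+1}`: the trace of its Fréchet derivative. -/
noncomputable def vdiv {n : ℕ}
    (F : EuclideanSpace ℝ (Fin (n + 1)) → EuclideanSpace ℝ (Fin (n + 1)))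
    (x : EuclideanSpace ℝ (Fin (n + 1))) : ℝ :=
  LinearMap.trace ℝ (EuclideanSpace ℝ (Fin (n + 1)))
    (fderiv ℝ F x : EuclideanSpace ℝ (Fin (n + 1)) →ₗ[ℝ] EuclideanSpace ℝ (Fin (n + 1)))

/-- The gradient of `u`, computed within the closure of `Ω` (so that it also represents
the continuous extension of the gradient up to the boundary of `Ω`). -/
noncomputable def gradC {n : ℕ} (Ω : Set (EuclideanSpace ℝ (Fin (n + 1))))
    (u : EuclideanSpace ℝ (Fin (n + 1)) → ℝ)
    (x : EuclideanSpace ℝ (Fin (n + 1))) : EuclideanSpace ℝ (Fin (n + 1)) :=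
  (InnerProductSpace.toDual ℝ (EuclideanSpace ℝ (Fin (n + 1)))).symm
    (fderivWithin ℝ u (closure Ω) x)

/-- `u` is a solution of the regularised level-set equation `(★★)_ε` on `Ω`:
it is smooth on the closure of `Ω`, satisfies
`div(∇u/√(ε² + |∇u|²)) = −(ε² + |∇u|²)^{−1/(2k)}` in `Ω`, and vanishes on `∂Ω`. -/
def IsRegularizedSolution (n : ℕ) (k ε : ℝ) (Ω : Set (EuclideanSpace ℝ (Fin (n + 1))))
    (u : EuclideanSpace ℝ (Fin (n + 1)) → ℝ) : Prop :=
  ContDiffOn ℝ (⊤ : ℕ∞) u (closure Ω) ∧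
  (∀ x ∈ Ω,
    vdiv (fun y => (Real.sqrt (ε ^ 2 + ‖gradC Ω u y‖ ^ 2))⁻¹ • gradC Ω u y) x
      = -((ε ^ 2 + ‖gradC Ω u x‖ ^ 2) ^ (-(1 : ℝ) / (2 * k)))) ∧
  (∀ x ∈ frontier Ω, u x = 0)

/-!
The equation prescribes the divergence of `ν(∇u)`, where `ν(p) = p / √(ε² + |p|²)`. The derivative
of `ν` at `p` is a positive multiple of the nonnegative operator `1 - ν(p) ⊗ ν(p)`, so at a local
maximum of `u - v` the gradients agree and `div ν(∇u) ≤ div ν(∇v)`: this is an elliptic equation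
with a comparison principle. Constants have zero curvature, hence `0 ≤ u`. For the upper bound fix
a boundary point `c` and compare `u` with the cone `-A |y - c|`, which is smooth in `Ω` and whose
curvature `-(A / √(ε² + A²)) n / |y - c|` lies below the right-hand side of the equation as soon as
`A` is large in terms of `n`, `k`, `ε` and the diameter. Hence `u + A |· - c|` is largest on the
boundary, where it is at most `A diam Ω`.
-/

open scoped Gradient Topology InnerProductSpace

section Gradient

variable {E : Type*} [NormedAddCommGroup E] [InnerProductSpace ℝ E] [CompleteSpace E]
  {f g : E → ℝ} {x : E}

theorem gradient_fun_sub (hf : DifferentiableAt ℝ f x) (hg : DifferentiableAt ℝ g x) :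
    ∇ (fun y => f y - g y) x = ∇ f x - ∇ g x := by
  simp only [gradient, fderiv_fun_sub hf hg, map_sub]

theorem gradient_eq_of_isLocalMax_sub (hf : DifferentiableAt ℝ f x) (hg : DifferentiableAt ℝ g x)
    (hmax : IsLocalMax (fun y => f y - g y) x) : ∇ f x = ∇ g x := by
  rw [← sub_eq_zero, ← gradient_fun_sub hf hg, gradient, hmax.fderiv_eq_zero, map_zero]

theorem differentiableAt_gradient (hf : ContDiffAt ℝ 2 f x) : DifferentiableAt ℝ (∇ f) x :=
  (InnerProductSpace.toDual ℝ E).symm.toContinuousLinearEquiv.differentiableAt.comp x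
    ((hf.fderiv_right (m := 1) (by norm_num)).differentiableAt one_ne_zero)

theorem deriv_deriv_nonpos_of_isLocalMax {φ : ℝ → ℝ} {t : ℝ} (hφ : ContinuousAt φ t)
    (hmax : IsLocalMax φ t) : deriv (deriv φ) t ≤ 0 := by
  by_contra! hpos
  have hmin : IsLocalMin φ t := isLocalMin_of_deriv_deriv_pos hpos hmax.deriv_eq_zero hφ
  have hconst : φ =ᶠ[𝓝 t] fun _ => φ t := by
    filter_upwards [hmax, hmin] with s using le_antisymm
  have hzero : deriv (deriv φ) t = 0 := by simpa using hconst.deriv.deriv_eq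
  exact hpos.ne' hzero

theorem inner_fderiv_gradient_nonpos_of_isLocalMax (hf : ContDiffAt ℝ 2 f x)
    (hmax : IsLocalMax f x) (v : E) : ⟪fderiv ℝ (∇ f) x v, v⟫_ℝ ≤ 0 := by
  set line : ℝ → E := fun t => x + t • v
  have hline (t : ℝ) : HasDerivAt line v t := by
    simpa [line] using ((hasDerivAt_id t).smul_const v).const_add x
  have hline_zero : line 0 = x := by simp [line]
  have hline_tendsto : Filter.Tendsto line (𝓝 0) (𝓝 x) := by
    simpa only [hline_zero] using (hline 0).continuousAt.tendsto
  have hfirst : deriv (f ∘ line) =ᶠ[𝓝 0] fun t => ⟪∇ f (line t), v⟫_ℝ := by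
    filter_upwards [hline_tendsto.eventually (hf.eventually (by simp))] with t ht
    rw [inner_gradient_left]
    exact ((ht.differentiableAt two_ne_zero).hasFDerivAt.comp_hasDerivAt t (hline t)).deriv
  have hsecond : deriv (deriv (f ∘ line)) 0 = ⟪fderiv ℝ (∇ f) x v, v⟫_ℝ := by
    have hgrad : HasDerivAt (∇ f ∘ line) (fderiv ℝ (∇ f) x v) 0 :=
      HasFDerivAt.comp_hasDerivAt_of_eq 0 (differentiableAt_gradient hf).hasFDerivAt (hline 0)
        hline_zero.symm
    rw [hfirst.deriv_eq]
    simpa using (hgrad.inner ℝ (hasDerivAt_const (0 : ℝ) v)).deriv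
  rw [← hsecond]
  refine deriv_deriv_nonpos_of_isLocalMax ?_ ?_
  · exact ContinuousAt.comp (hline_zero.symm ▸ hf.continuousAt) (hline 0).continuousAt
  · filter_upwards [hline_tendsto.eventually hmax] with t ht
    simpa only [Function.comp_apply, hline_zero] using ht

end Gradient

section Trace

variable {E : Type*} [NormedAddCommGroup E] [InnerProductSpace ℝ E] [FiniteDimensional ℝ E]

theorem trace_nonpos_of_inner_nonpos {L : E →ₗ[ℝ] E} (hL : ∀ v, ⟪L v, v⟫_ℝ ≤ 0) :
    LinearMap.trace ℝ E L ≤ 0 := by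
  rw [L.trace_eq_sum_inner (stdOrthonormalBasis ℝ E)]
  exact Finset.sum_nonpos fun i _ => (real_inner_comm _ _).trans_le (hL _)

theorem trace_le_inner_of_norm_eq_one {L : E →ₗ[ℝ] E} (hL : ∀ v, ⟪L v, v⟫_ℝ ≤ 0) {e : E}
    (he : ‖e‖ = 1) : LinearMap.trace ℝ E L ≤ ⟪L e, e⟫_ℝ := by
  classical
  have horth : Orthonormal ℝ ((↑) : ({e} : Set E) → E) :=
    ⟨by simpa using he, fun i j hij => absurd (Subsingleton.elim i j) hij⟩
  obtain ⟨s, b, hes, hb⟩ := horth.exists_orthonormalBasis_extension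
  have hbe : b ⟨e, hes rfl⟩ = e := by rw [hb]
  rw [L.trace_eq_sum_inner b, ← Finset.add_sum_erase _ _ (Finset.mem_univ ⟨e, hes rfl⟩), hbe,
    real_inner_comm]
  exact add_le_of_nonpos_right <|
    Finset.sum_nonpos fun i _ => (real_inner_comm _ _).trans_le (hL _)

theorem norm_sq_mul_trace_le_inner {L : E →ₗ[ℝ] E} (hL : ∀ v, ⟪L v, v⟫_ℝ ≤ 0) (p : E) :
    ‖p‖ ^ 2 * LinearMap.trace ℝ E L ≤ ⟪L p, p⟫_ℝ := by
  obtain rfl | hp := eq_or_ne p 0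
  · simp
  have hnorm : ‖p‖ ≠ 0 := norm_ne_zero_iff.mpr hp
  calc ‖p‖ ^ 2 * LinearMap.trace ℝ E L
      ≤ ‖p‖ ^ 2 * ⟪L (‖p‖⁻¹ • p), ‖p‖⁻¹ • p⟫_ℝ := by
        gcongr
        exact trace_le_inner_of_norm_eq_one hL (norm_smul_inv_norm hp)
    _ = ⟪L p, p⟫_ℝ := by
        rw [map_smul, real_inner_smul_left, real_inner_smul_right]
        field_simp

theorem trace_id_sub_rankOne (p : E) :
    LinearMap.trace ℝ E (.id ℝ E - InnerProductSpace.rankOne ℝ p p : E →L[ℝ] E).toLinearMap =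
      Module.finrank ℝ E - ‖p‖ ^ 2 := by
  rw [ContinuousLinearMap.toLinearMap_sub, map_sub, InnerProductSpace.trace_rankOne,
    real_inner_self_eq_norm_sq, ContinuousLinearMap.coe_id, LinearMap.trace_id]

theorem trace_id_sub_rankOne_comp_nonpos {L : E →L[ℝ] E} (hL : ∀ v, ⟪L v, v⟫_ℝ ≤ 0) {p : E}
    (hp : ‖p‖ ≤ 1) :
    LinearMap.trace ℝ E
      ((.id ℝ E - InnerProductSpace.rankOne ℝ p p) ∘L L : E →L[ℝ] E).toLinearMap ≤ 0 := by
  have htrace : LinearMap.trace ℝ E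
      ((.id ℝ E - InnerProductSpace.rankOne ℝ p p) ∘L L : E →L[ℝ] E).toLinearMap =
        LinearMap.trace ℝ E L.toLinearMap - ⟪L p, p⟫_ℝ := by
    rw [ContinuousLinearMap.toLinearMap_comp, LinearMap.trace_comp_comm',
      ← ContinuousLinearMap.toLinearMap_comp, ContinuousLinearMap.comp_sub,
      ContinuousLinearMap.comp_id, InnerProductSpace.comp_rankOne,
      ContinuousLinearMap.toLinearMap_sub, map_sub, InnerProductSpace.trace_rankOne,
      real_inner_comm]
  have hnonpos : LinearMap.trace ℝ E L.toLinearMap ≤ 0 := trace_nonpos_of_inner_nonpos hL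
  have hle : ‖p‖ ^ 2 * LinearMap.trace ℝ E L.toLinearMap ≤ ⟪L p, p⟫_ℝ :=
    norm_sq_mul_trace_le_inner hL p
  have hsq : ‖p‖ ^ 2 ≤ 1 := pow_le_one₀ (norm_nonneg p) hp
  rw [htrace]
  nlinarith

end Trace

section RegularizedNormal

variable {E : Type*} [NormedAddCommGroup E] [InnerProductSpace ℝ E]

/-- The field `p / √(ε² + |p|²)`: at `p = ∇u` it is the horizontal part of the unit normal to the
graph of `u / ε`. The value `ε = 0` is allowed and gives the direction `p / |p|`. -/
noncomputable def regularizedNormal (ε : ℝ) (p : E) : E :=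
  (√(ε ^ 2 + ‖p‖ ^ 2))⁻¹ • p

theorem regularizedNormal_zero_left (p : E) : regularizedNormal 0 p = ‖p‖⁻¹ • p := by
  simp [regularizedNormal]

theorem norm_regularizedNormal_zero_left {p : E} (hp : p ≠ 0) : ‖regularizedNormal 0 p‖ = 1 := by
  rw [regularizedNormal_zero_left]
  exact norm_smul_inv_norm hp

theorem norm_regularizedNormal_le_one (ε : ℝ) (p : E) : ‖regularizedNormal ε p‖ ≤ 1 := by
  rw [regularizedNormal, norm_smul, norm_inv, Real.norm_of_nonneg (Real.sqrt_nonneg _)]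
  refine inv_mul_le_one_of_le₀ ?_ (Real.sqrt_nonneg _)
  exact Real.le_sqrt_of_sq_le (le_add_of_nonneg_left (sq_nonneg ε))

theorem regularizedNormal_smul_of_norm_eq_one (ε a : ℝ) {e : E} (he : ‖e‖ = 1) :
    regularizedNormal ε (a • e) = (a / √(ε ^ 2 + a ^ 2)) • e := by
  rw [regularizedNormal, norm_smul, he, mul_one, Real.norm_eq_abs, sq_abs, smul_smul,
    inv_mul_eq_div]

theorem hasFDerivAt_sqrt_sq_add_norm_sq {ε : ℝ} {p : E} (hp : 0 < ε ^ 2 + ‖p‖ ^ 2) :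
    HasFDerivAt (fun q : E => √(ε ^ 2 + ‖q‖ ^ 2)) (innerSL ℝ (regularizedNormal ε p)) p := by
  refine (((hasFDerivAt_id p).norm_sq.const_add (ε ^ 2)).sqrt hp.ne').congr_fderiv ?_
  ext v
  simp only [id_eq, one_div, mul_inv_rev, ContinuousLinearMap.comp_id, smul_apply,
    coe_innerSL_apply, nsmul_eq_mul, Nat.cast_ofNat, smul_eq_mul, regularizedNormal, map_smul]
  field_simp

theorem hasFDerivAt_regularizedNormal {ε : ℝ} {p : E} (hp : 0 < ε ^ 2 + ‖p‖ ^ 2) :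
    HasFDerivAt (regularizedNormal ε)
      ((√(ε ^ 2 + ‖p‖ ^ 2))⁻¹ •
        (.id ℝ E -
          InnerProductSpace.rankOne ℝ (regularizedNormal ε p) (regularizedNormal ε p))) p := by
  have hW : √(ε ^ 2 + ‖p‖ ^ 2) ≠ 0 := (Real.sqrt_pos.mpr hp).ne'
  have hinv := (hasDerivAt_inv hW).comp_hasFDerivAt p (hasFDerivAt_sqrt_sq_add_norm_sq hp)
  refine (hinv.smul (hasFDerivAt_id p)).congr_fderiv ?_
  ext v
  simp only [Function.comp_apply, regularizedNormal, map_smul, neg_smul, id_eq, add_apply,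
    smul_apply, ContinuousLinearMap.id_apply, ContinuousLinearMap.smulRight_apply, neg_apply,
    coe_innerSL_apply, smul_eq_mul, sub_apply, InnerProductSpace.rankOne_apply]
  module

variable {c x : E}

theorem hasGradientAt_norm_sub [CompleteSpace E] (hx : x ≠ c) :
    HasGradientAt (fun y => ‖y - c‖) (regularizedNormal 0 (x - c)) x := by
  have hxc : x - c ≠ 0 := sub_ne_zero.mpr hx
  have hnorm := (hasFDerivAt_sqrt_sq_add_norm_sq (ε := 0) (p := x - c) (by positivity)).comp x
    ((hasFDerivAt_id x).sub_const c)
  simp only [ne_eq, OfNat.ofNat_ne_zero, not_false_eq_true, zero_pow, zero_add, norm_nonneg,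
    Real.sqrt_sq, ContinuousLinearMap.comp_id] at hnorm
  exact hnorm

theorem hasFDerivAt_regularizedNormal_zero_sub (hx : x ≠ c) :
    HasFDerivAt (fun y => regularizedNormal 0 (y - c))
      (‖x - c‖⁻¹ • (.id ℝ E - InnerProductSpace.rankOne ℝ (regularizedNormal 0 (x - c))
        (regularizedNormal 0 (x - c)))) x := by
  have hxc : x - c ≠ 0 := sub_ne_zero.mpr hx
  simpa [Function.comp_def] using
    (hasFDerivAt_regularizedNormal (ε := 0) (p := x - c) (by positivity)).comp x
      ((hasFDerivAt_id x).sub_const c)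

end RegularizedNormal

section Curvature

variable {n : ℕ} {ε : ℝ} {Ω : Set (EuclideanSpace ℝ (Fin (n + 1)))}
  {u v : EuclideanSpace ℝ (Fin (n + 1)) → ℝ} {x : EuclideanSpace ℝ (Fin (n + 1))}

/-- The operator `div(∇u / √(ε² + |∇u|²))` on the left-hand side of the equation, formed with the
gradient on the whole space; it agrees in the open set `Ω` with the one formed with `gradC Ω u`. -/
noncomputable def regularizedCurvature (ε : ℝ) (u : EuclideanSpace ℝ (Fin (n + 1)) → ℝ)
    (x : EuclideanSpace ℝ (Fin (n + 1))) : ℝ :=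
  vdiv (fun y => regularizedNormal ε (∇ u y)) x

theorem regularizedCurvature_const (a : ℝ) :
    regularizedCurvature ε (fun _ => a) x = 0 := by
  simp [regularizedCurvature, vdiv]

theorem regularizedCurvature_eq_trace (hε : 0 < ε) (hu : ContDiffAt ℝ 2 u x) :
    regularizedCurvature ε u x = (√(ε ^ 2 + ‖∇ u x‖ ^ 2))⁻¹ *
      LinearMap.trace ℝ (EuclideanSpace ℝ (Fin (n + 1)))
        ((.id ℝ _ - InnerProductSpace.rankOne ℝ (regularizedNormal ε (∇ u x))
          (regularizedNormal ε (∇ u x))) ∘L fderiv ℝ (∇ u) x).toLinearMap := by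
  have hderiv := (hasFDerivAt_regularizedNormal (ε := ε) (p := ∇ u x) (by positivity)).comp x
    (differentiableAt_gradient hu).hasFDerivAt
  rw [regularizedCurvature, vdiv]
  refine (congrArg _ (congrArg _ hderiv.fderiv)).trans ?_
  rw [ContinuousLinearMap.smul_comp, ContinuousLinearMap.toLinearMap_smul, map_smul, smul_eq_mul]

theorem regularizedCurvature_le_of_isLocalMax_sub (hε : 0 < ε) (hu : ContDiffAt ℝ 2 u x)
    (hv : ContDiffAt ℝ 2 v x) (hmax : IsLocalMax (fun y => u y - v y) x) :
    regularizedCurvature ε u x ≤ regularizedCurvature ε v x := by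
  have hgrad : ∇ u x = ∇ v x := gradient_eq_of_isLocalMax_sub
    (hu.differentiableAt two_ne_zero) (hv.differentiableAt two_ne_zero) hmax
  have hhess : fderiv ℝ (∇ fun y => u y - v y) x = fderiv ℝ (∇ u) x - fderiv ℝ (∇ v) x := by
    have hsub : (∇ fun y => u y - v y) =ᶠ[𝓝 x] fun y => ∇ u y - ∇ v y := by
      filter_upwards [hu.eventually (by simp), hv.eventually (by simp)] with y huy hvy
      exact gradient_fun_sub (huy.differentiableAt two_ne_zero) (hvy.differentiableAt two_ne_zero)
    rw [hsub.fderiv_eq]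
    exact fderiv_fun_sub (differentiableAt_gradient hu) (differentiableAt_gradient hv)
  have htrace := trace_id_sub_rankOne_comp_nonpos
    (inner_fderiv_gradient_nonpos_of_isLocalMax (hu.sub hv) hmax)
    (norm_regularizedNormal_le_one ε (∇ v x))
  rw [hhess, ContinuousLinearMap.comp_sub, ContinuousLinearMap.toLinearMap_sub, map_sub,
    sub_nonpos] at htrace
  rw [regularizedCurvature_eq_trace hε hu, regularizedCurvature_eq_trace hε hv, hgrad]
  gcongr

theorem sub_le_of_regularizedCurvature_lt (hε : 0 < ε) (hΩ : IsOpen Ω)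
    (hb : Bornology.IsBounded Ω) (hu : ContinuousOn u (closure Ω))
    (hv : ContinuousOn v (closure Ω)) (hu₂ : ContDiffOn ℝ 2 u Ω) (hv₂ : ContDiffOn ℝ 2 v Ω)
    (hlt : ∀ y ∈ Ω, ∇ u y = ∇ v y → regularizedCurvature ε v y < regularizedCurvature ε u y)
    {M : ℝ} (hM : ∀ y ∈ frontier Ω, u y - v y ≤ M) (hx : x ∈ Ω) : u x - v x ≤ M := by
  obtain ⟨y, hy, hmax⟩ :=
    hb.isCompact_closure.exists_isMaxOn ⟨x, subset_closure hx⟩ (hu.sub hv)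
  refine (hmax (subset_closure hx)).trans (hM y ?_)
  rw [hΩ.frontier_eq]
  refine ⟨hy, fun hyΩ => ?_⟩
  have hnhds : Ω ∈ 𝓝 y := hΩ.mem_nhds hyΩ
  have huy : ContDiffAt ℝ 2 u y := hu₂.contDiffAt hnhds
  have hvy : ContDiffAt ℝ 2 v y := hv₂.contDiffAt hnhds
  have hlocal : IsLocalMax (fun z => u z - v z) y :=
    hmax.isLocalMax (Filter.mem_of_superset hnhds subset_closure)
  have hgrad : ∇ u y = ∇ v y := gradient_eq_of_isLocalMax_sub
    (huy.differentiableAt two_ne_zero) (hvy.differentiableAt two_ne_zero) hlocal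
  exact (hlt y hyΩ hgrad).not_ge (regularizedCurvature_le_of_isLocalMax_sub hε huy hvy hlocal)

end Curvature

section Cone

variable {n : ℕ} {c x : EuclideanSpace ℝ (Fin (n + 1))}

theorem hasGradientAt_cone (A : ℝ) (hx : x ≠ c) :
    HasGradientAt (fun y => -A * ‖y - c‖) (-A • regularizedNormal 0 (x - c)) x := by
  refine ((hasGradientAt_norm_sub hx).hasFDerivAt.const_mul (-A)).congr_fderiv ?_
  rw [map_smul]

theorem contDiffAt_cone (A : ℝ) (hx : x ≠ c) : ContDiffAt ℝ 2 (fun y => -A * ‖y - c‖) x :=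
  contDiffAt_const.mul ((contDiffAt_id.sub contDiffAt_const).norm ℝ (sub_ne_zero.mpr hx))

theorem norm_gradient_cone_sq (A : ℝ) (hx : x ≠ c) :
    ‖∇ (fun y => -A * ‖y - c‖) x‖ ^ 2 = A ^ 2 := by
  rw [(hasGradientAt_cone A hx).gradient, norm_smul,
    norm_regularizedNormal_zero_left (sub_ne_zero.mpr hx), mul_one, norm_neg, Real.norm_eq_abs,
    sq_abs]

theorem vdiv_const_smul_regularizedNormal_zero_sub (a : ℝ) (hx : x ≠ c) :
    vdiv (fun y => a • regularizedNormal 0 (y - c)) x = a * (n / ‖x - c‖) := by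
  rw [vdiv, fderiv_fun_const_smul (hasFDerivAt_regularizedNormal_zero_sub hx).differentiableAt,
    (hasFDerivAt_regularizedNormal_zero_sub hx).fderiv]
  rw [ContinuousLinearMap.toLinearMap_smul, ContinuousLinearMap.toLinearMap_smul, map_smul,
    map_smul, trace_id_sub_rankOne, norm_regularizedNormal_zero_left (sub_ne_zero.mpr hx),
    finrank_euclideanSpace_fin, smul_eq_mul, smul_eq_mul]
  push_cast
  ring

theorem regularizedCurvature_cone (ε A : ℝ) (hx : x ≠ c) :
    regularizedCurvature ε (fun y => -A * ‖y - c‖) x =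
      -(A / √(ε ^ 2 + A ^ 2) * (n / ‖x - c‖)) := by
  have hnormal : (fun y => regularizedNormal ε (∇ (fun z => -A * ‖z - c‖) y)) =ᶠ[𝓝 x]
      fun y => (-A / √(ε ^ 2 + A ^ 2)) • regularizedNormal 0 (y - c) := by
    filter_upwards [isOpen_ne.mem_nhds hx] with y hy
    rw [(hasGradientAt_cone A hy).gradient, regularizedNormal_smul_of_norm_eq_one ε (-A)
      (norm_regularizedNormal_zero_left (sub_ne_zero.mpr hy)), neg_sq]
  rw [regularizedCurvature, vdiv, hnormal.fderiv_eq, ← vdiv,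
    vdiv_const_smul_regularizedNormal_zero_sub _ hx]
  ring

end Cone

theorem nonempty_frontier_of_isBounded {E : Type*} [NormedAddCommGroup E] [NormedSpace ℝ E]
    [Nontrivial E] {s : Set E} (hs : s.Nonempty) (hb : Bornology.IsBounded s) :
    (frontier s).Nonempty := by
  refine nonempty_frontier_iff.mpr ⟨hs, fun huniv => ?_⟩
  exact NormedSpace.unbounded_univ ℝ E (huniv ▸ hb)

theorem rpow_neg_lt_div_sqrt_mul_div {k ε A m r : ℝ} (hk : 0 < k) (hε : 0 < ε) (hεA : ε ≤ A)
    (hm : 0 < m) (hr : 0 < r) (hA : (2 * r / m) ^ k ≤ A) :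
    (ε ^ 2 + A ^ 2) ^ (-1 / (2 * k)) < A / √(ε ^ 2 + A ^ 2) * (m / r) := by
  have hA₀ : 0 < A := hε.trans_le hεA
  have hroot : 2 * r / m ≤ A ^ k⁻¹ := (Real.le_rpow_inv_iff_of_pos (by positivity) hA₀.le hk).mpr hA
  have hhalf : 1 / 2 < A / √(ε ^ 2 + A ^ 2) := by
    rw [div_lt_div_iff₀ two_pos (by positivity), one_mul, Real.sqrt_lt' (by positivity)]
    nlinarith
  calc (ε ^ 2 + A ^ 2) ^ (-1 / (2 * k))
      ≤ (A ^ 2) ^ (-1 / (2 * k)) :=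
        Real.rpow_le_rpow_of_nonpos (by positivity) (by nlinarith)
          (div_nonpos_of_nonpos_of_nonneg (by norm_num) (by positivity))
    _ = (A ^ k⁻¹)⁻¹ := by
        rw [← Real.rpow_natCast, ← Real.rpow_mul hA₀.le, ← Real.rpow_neg hA₀.le]
        congr 1
        push_cast
        field_simp
    _ ≤ (2 * r / m)⁻¹ := by gcongr
    _ = 1 / 2 * (m / r) := by field_simp
    _ < A / √(ε ^ 2 + A ^ 2) * (m / r) := by gcongr

theorem gradC_eq_gradient {n : ℕ} {Ω : Set (EuclideanSpace ℝ (Fin (n + 1)))} (hΩ : IsOpen Ω)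
    (u : EuclideanSpace ℝ (Fin (n + 1)) → ℝ) {x : EuclideanSpace ℝ (Fin (n + 1))} (hx : x ∈ Ω) :
    gradC Ω u x = ∇ u x := by
  rw [gradC, gradient,
    fderivWithin_of_mem_nhds (Filter.mem_of_superset (hΩ.mem_nhds hx) subset_closure)]

namespace IsRegularizedSolution

variable {n : ℕ} {k ε : ℝ} {Ω : Set (EuclideanSpace ℝ (Fin (n + 1)))}
  {u : EuclideanSpace ℝ (Fin (n + 1)) → ℝ} {x : EuclideanSpace ℝ (Fin (n + 1))}

theorem continuousOn (hu : IsRegularizedSolution n k ε Ω u) : ContinuousOn u (closure Ω) :=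
  hu.1.continuousOn

theorem contDiffOn_two (hu : IsRegularizedSolution n k ε Ω u) : ContDiffOn ℝ 2 u Ω :=
  (hu.1.of_le (WithTop.coe_le_coe.mpr (le_top : (2 : ℕ∞) ≤ ⊤))).mono subset_closure

theorem eq_zero_of_mem_frontier (hu : IsRegularizedSolution n k ε Ω u) (hx : x ∈ frontier Ω) :
    u x = 0 :=
  hu.2.2 x hx

theorem regularizedCurvature_eq (hu : IsRegularizedSolution n k ε Ω u) (hΩ : IsOpen Ω)
    (hx : x ∈ Ω) :
    regularizedCurvature ε u x = -(ε ^ 2 + ‖∇ u x‖ ^ 2) ^ (-1 / (2 * k)) := by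
  have hfield : (fun y => regularizedNormal ε (∇ u y)) =ᶠ[𝓝 x]
      fun y => (√(ε ^ 2 + ‖gradC Ω u y‖ ^ 2))⁻¹ • gradC Ω u y := by
    filter_upwards [hΩ.mem_nhds hx] with y hy
    rw [gradC_eq_gradient hΩ u hy, regularizedNormal]
  rw [regularizedCurvature, vdiv, hfield.fderiv_eq, ← gradC_eq_gradient hΩ u hx]
  exact hu.2.1 x hx

theorem nonneg (hu : IsRegularizedSolution n k ε Ω u) (hε : 0 < ε) (hΩ : IsOpen Ω)
    (hb : Bornology.IsBounded Ω) (hx : x ∈ Ω) : 0 ≤ u x := by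
  have hlt : ∀ y ∈ Ω, ∇ (fun _ => (0 : ℝ)) y = ∇ u y →
      regularizedCurvature ε u y < regularizedCurvature ε (fun _ => 0) y := fun y hy _ => by
    rw [regularizedCurvature_const, hu.regularizedCurvature_eq hΩ hy, neg_lt_zero]
    positivity
  simpa using sub_le_of_regularizedCurvature_lt hε hΩ hb continuousOn_const hu.continuousOn
    contDiffOn_const hu.contDiffOn_two hlt (M := 0)
    (fun y hy => by rw [hu.eq_zero_of_mem_frontier hy, sub_zero]) hx

theorem add_mul_norm_sub_le (hu : IsRegularizedSolution n k ε Ω u) (hn : 1 ≤ n) (hk : 0 < k)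
    (hε : 0 < ε) (hΩ : IsOpen Ω) (hb : Bornology.IsBounded Ω)
    {c : EuclideanSpace ℝ (Fin (n + 1))} (hc : c ∉ Ω) {A R : ℝ} (hεA : ε ≤ A)
    (hA : (2 * R / n) ^ k ≤ A) (hR : ∀ y ∈ closure Ω, ‖y - c‖ ≤ R) (hx : x ∈ Ω) :
    u x + A * ‖x - c‖ ≤ A * R := by
  have hne : ∀ y ∈ Ω, y ≠ c := fun y hy hyc => hc (hyc ▸ hy)
  have hm : (0 : ℝ) < n := Nat.cast_pos.mpr hn
  have hlt : ∀ y ∈ Ω, ∇ u y = ∇ (fun z => -A * ‖z - c‖) y →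
      regularizedCurvature ε (fun z => -A * ‖z - c‖) y < regularizedCurvature ε u y := by
    intro y hy hgrad
    have hr : 0 < ‖y - c‖ := norm_sub_pos_iff.mpr (hne y hy)
    rw [regularizedCurvature_cone ε A (hne y hy), hu.regularizedCurvature_eq hΩ hy, hgrad,
      norm_gradient_cone_sq A (hne y hy), neg_lt_neg_iff]
    refine rpow_neg_lt_div_sqrt_mul_div hk hε hεA hm hr (le_trans ?_ hA)
    gcongr
    exact hR y (subset_closure hy)
  have hbd : ∀ y ∈ frontier Ω, u y - -A * ‖y - c‖ ≤ A * R := fun y hy => by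
    rw [hu.eq_zero_of_mem_frontier hy, zero_sub, neg_mul, neg_neg]
    exact mul_le_mul_of_nonneg_left (hR y (frontier_subset_closure hy)) (hε.le.trans hεA)
  simpa using sub_le_of_regularizedCurvature_lt hε hΩ hb hu.continuousOn (by fun_prop)
    hu.contDiffOn_two (fun y hy => (contDiffAt_cone A (hne y hy)).contDiffWithinAt) hlt hbd hx

end IsRegularizedSolution

theorem sup_bound_general {n : ℕ} (hn : 1 ≤ n) {k ε : ℝ} (hk : 0 < k) (hε : 0 < ε)
    {Ω : Set (EuclideanSpace ℝ (Fin (n + 1)))} (hΩ : IsOpen Ω) (hb : Bornology.IsBounded Ω)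
    {u : EuclideanSpace ℝ (Fin (n + 1)) → ℝ} (hu : IsRegularizedSolution n k ε Ω u) :
    ∀ x ∈ Ω, |u x| ≤ max ε ((2 * diam Ω / n) ^ k) * diam Ω := by
  intro x hx
  obtain ⟨c, hc⟩ : (frontier Ω).Nonempty := nonempty_frontier_of_isBounded ⟨x, hx⟩ hb
  have hcΩ : c ∉ Ω := (hΩ.frontier_eq ▸ hc).2
  have hdist : ∀ y ∈ closure Ω, ‖y - c‖ ≤ diam Ω := fun y hy => by
    rw [← dist_eq_norm, ← diam_closure]
    exact dist_le_diam_of_mem hb.closure hy (frontier_subset_closure hc)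
  set A := max ε ((2 * diam Ω / n) ^ k)
  have hεA : ε ≤ A := le_max_left _ _
  have hbarrier : u x + A * ‖x - c‖ ≤ A * diam Ω :=
    hu.add_mul_norm_sub_le hn hk hε hΩ hb hcΩ hεA (le_max_right _ _) hdist hx
  have hcone : 0 ≤ A * ‖x - c‖ := mul_nonneg (hε.le.trans hεA) (norm_nonneg _)
  rw [abs_of_nonneg (hu.nonneg hε hΩ hb hx)]
  linarith

/-- **Uniform sup bound** (Lemma 3.1, Euclidean case): there is a constant `C`, depending
only on `n`, `k` and the diameter of `Ω`, bounding `sup_Ω |u|` for every solution `u` of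
`(★★)_ε` with `ε ∈ (0,1]`. -/
theorem sup_bound (n : ℕ) (hn : 1 ≤ n) (k : ℝ) (hk : 1 ≤ k) :
    ∃ C : ℝ → ℝ, ∀ Ω : Set (EuclideanSpace ℝ (Fin (n + 1))),
      IsOpen Ω → Bornology.IsBounded Ω →
      ∀ ε : ℝ, ε ∈ Ioc (0 : ℝ) 1 →
      ∀ u : EuclideanSpace ℝ (Fin (n + 1)) → ℝ,
        IsRegularizedSolution n k ε Ω u →
        ∀ x ∈ Ω, |u x| ≤ C (Metric.diam Ω) := by
  refine ⟨fun D => max 1 ((2 * D / n) ^ k) * D, fun Ω hΩ hb ε hε u hu x hx => ?_⟩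
  exact (sup_bound_general hn (one_pos.trans_le hk) hε.1 hΩ hb hu x hx).trans
    (mul_le_mul_of_nonneg_right (max_le_max_right _ hε.2) diam_nonneg)
end

section
/- Let n ≥ 1, k ≥ 1, ε ∈ (0,1], let Ω ⊂ ℝ^{n+1} be a bounded open set, and let u be a solution of the regularised level-set equation (★★)_ε on Ω. Then sup_Ω |∇u| ≤ sup_{∂Ω} (1 + √(ε² + |∇u|²)), where on the right-hand side ∇u denotes the (continuous extension of the) gradient of u on ∂Ω. -/
open MeasureTheory Metric Set

/-!
For each fixed vector `e`, differentiating the equation in the direction `e` shows that the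
component `⟪∇u, e⟫` solves a linear elliptic equation without zeroth-order term, so it attains its
maximum on the boundary. Applied with `e = ∇u(x)` at a point `x` where `|∇u|` is maximal, this and
Cauchy–Schwarz give a boundary point `y` with `|∇u(x)| ≤ |∇u(y)|`.

No regularity of `∂Ω` is needed for `∇u`, computed within the closure of `Ω`, to be continuous up
to the boundary. Where the derivative within the closure is not unique, `Ω` lies so close to a
hyperplane near the point that short segments transversal to the hyperplane leave `Ω` on both
sides. As `u` is constant on `∂Ω`, it has critical points along such segments, so its continuously
extended gradient vanishes there, which is also the value selected by `fderivWithin`.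
-/

open Filter Topology InnerProductSpace
open scoped Gradient

section BoundaryGradient

lemma exists_mem_isExtrOn_of_eq_const_off {X : Type*} [TopologicalSpace X] {K U : Set X}
    (hK : IsCompact K) {f : X → ℝ} (hf : ContinuousOn f K) {c : ℝ}
    (hc : ∀ x ∈ K \ U, f x = c) (hKU : (K ∩ U).Nonempty) :
    ∃ x ∈ K ∩ U, IsExtrOn f K x := by
  obtain ⟨x₀, hx₀K, hx₀U⟩ := hKU
  obtain ⟨a, haK, ha⟩ := hK.exists_isMaxOn ⟨x₀, hx₀K⟩ hf
  obtain ⟨b, hbK, hb⟩ := hK.exists_isMinOn ⟨x₀, hx₀K⟩ hf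
  by_cases haU : a ∈ U
  · exact ⟨a, ⟨haK, haU⟩, ha.isExtr⟩
  by_cases hbU : b ∈ U
  · exact ⟨b, ⟨hbK, hbU⟩, hb.isExtr⟩
  refine ⟨x₀, ⟨hx₀K, hx₀U⟩, IsMaxOn.isExtr fun x hx => ?_⟩
  calc f x ≤ f a := ha hx
    _ = f b := by rw [hc a ⟨haK, haU⟩, hc b ⟨hbK, hbU⟩]
    _ ≤ f x₀ := hb hx₀K

variable {E : Type*} [NormedAddCommGroup E] [NormedSpace ℝ E] {Ω : Set E} {u : E → ℝ} {c : ℝ}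

lemma exists_isLocalExtr_of_chord (hΩ : IsOpen Ω) (hu : ContinuousOn u (closure Ω))
    (huc : ∀ x ∈ frontier Ω, u x = c) {y w : E} (hy : y ∈ Ω) {t : ℝ} (ht : 0 ≤ t)
    (hpos : y + t • w ∉ closure Ω) (hneg : y + (-t) • w ∉ closure Ω) :
    ∃ s ∈ Icc (-t) t, y + s • w ∈ Ω ∧ IsLocalExtr (fun r : ℝ => u (y + r • w)) s := by
  set line : ℝ → E := fun r => y + r • w
  have hline : Continuous line := by fun_prop
  have hK : IsCompact (Icc (-t) t ∩ line ⁻¹' closure Ω) :=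
    isCompact_Icc.inter_right (isClosed_closure.preimage hline)
  have hconst : ∀ r ∈ (Icc (-t) t ∩ line ⁻¹' closure Ω) \ line ⁻¹' Ω, u (line r) = c :=
    fun r hr => huc _ ⟨hr.1.2, hΩ.interior_eq.symm ▸ hr.2⟩
  have hline₀ : line 0 ∈ Ω := by simpa [line] using hy
  obtain ⟨s, ⟨⟨hst, -⟩, hsΩ⟩, hs⟩ := exists_mem_isExtrOn_of_eq_const_off hK
    (hu.comp hline.continuousOn fun r hr => hr.2) hconst
    ⟨0, ⟨by simpa using ht, subset_closure hline₀⟩, hline₀⟩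
  have hs_left : -t ≠ s := by rintro rfl; exact hneg (subset_closure hsΩ)
  have hs_right : s ≠ t := by rintro rfl; exact hpos (subset_closure hsΩ)
  refine ⟨s, hst, hsΩ, hs.isLocalExtr (inter_mem
    (Icc_mem_nhds (hst.1.lt_of_ne hs_left) (hst.2.lt_of_ne hs_right)) ?_)⟩
  exact mem_of_superset ((hΩ.preimage hline).mem_nhds hsΩ) (preimage_mono subset_closure)

-- Near `x` the set `K` is within `o(‖z - x‖)` of the hyperplane `l (z - x) = 0`.
lemma eventually_add_norm_smul_notMem {K : Set E} {x w : E} {l : E →L[ℝ] ℝ}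
    (hl : HasFDerivWithinAt (fun _ => (0 : ℝ)) l K x) (hw : l w ≠ 0) :
    ∀ᶠ y in 𝓝[K] x, y ≠ x → y + ‖y - x‖ • w ∉ K := by
  obtain ⟨δ, hδ, hδw⟩ : ∃ δ > 0, δ * (2 + ‖w‖) < |l w| := by
    refine ⟨|l w| / (2 * (2 + ‖w‖)), by positivity, ?_⟩
    have : 0 < |l w| := abs_pos.2 hw
    field_simp
    linarith
  have hsmall : ∀ᶠ z in 𝓝 x, z ∈ K → |l (z - x)| ≤ δ * ‖z - x‖ :=
    eventually_nhdsWithin_iff.1 (by simpa [abs_sub_comm (l x)] using hl.isLittleO.def hδ)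
  have hshift : Tendsto (fun y => y + ‖y - x‖ • w) (𝓝 x) (𝓝 x) := by
    have : Continuous fun y => y + ‖y - x‖ • w := by fun_prop
    simpa using this.tendsto x
  refine eventually_nhdsWithin_iff.2 ?_
  filter_upwards [hsmall, hshift.eventually hsmall] with y hy hyw hyK hyx hmem
  set t := ‖y - x‖
  have ht : 0 < t := norm_pos_iff.2 (sub_ne_zero.2 hyx)
  have hsub : y + t • w - x = (y - x) + t • w := by abel
  have hnorm : ‖y + t • w - x‖ ≤ t * (1 + ‖w‖) :=
    calc ‖y + t • w - x‖ ≤ ‖y - x‖ + ‖t • w‖ := hsub ▸ norm_add_le _ _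
      _ = t * (1 + ‖w‖) := by rw [norm_smul, norm_norm]; ring
  have hlt : t * |l w| < t * |l w| :=
    calc t * |l w| = |l (y + t • w - x) - l (y - x)| := by
          rw [hsub, map_add, add_sub_cancel_left, map_smul, smul_eq_mul, abs_mul, abs_norm]
      _ ≤ |l (y + t • w - x)| + |l (y - x)| := abs_sub _ _
      _ ≤ δ * (t * (1 + ‖w‖)) + δ * t :=
          add_le_add ((hyw hmem).trans (mul_le_mul_of_nonneg_left hnorm hδ.le)) (hy hyK)
      _ = t * (δ * (2 + ‖w‖)) := by ring
      _ < t * |l w| := mul_lt_mul_of_pos_left hδw ht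
  exact lt_irrefl _ hlt

lemma eventually_forall_chord_mem {x : E} {N : Set E} (hN : N ∈ 𝓝 x) (w : E) :
    ∀ᶠ y in 𝓝 x, ∀ s ∈ Icc (-‖y - x‖) ‖y - x‖, y + s • w ∈ N := by
  obtain ⟨r, hr, hrN⟩ := Metric.mem_nhds_iff.1 hN
  have hlim : Tendsto (fun y => ‖y - x‖ + ‖y - x‖ * ‖w‖) (𝓝 x) (𝓝 0) := by
    have : Continuous fun y => ‖y - x‖ + ‖y - x‖ * ‖w‖ := by fun_prop
    simpa using this.tendsto x
  filter_upwards [hlim.eventually_lt_const hr] with y hy s hs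
  refine hrN (mem_ball_iff_norm.2 ?_)
  calc ‖y + s • w - x‖ ≤ ‖y - x‖ + ‖s • w‖ := by
        rw [add_sub_right_comm]; exact norm_add_le _ _
    _ ≤ ‖y - x‖ + ‖y - x‖ * ‖w‖ := by
        rw [norm_smul]; gcongr; exact abs_le.2 hs
    _ < r := hy

lemma apply_eq_zero_of_hasFDerivWithinAt_zero (hΩ : IsOpen Ω) (hu : ContinuousOn u (closure Ω))
    (huc : ∀ x ∈ frontier Ω, u x = c) {x : E} (hx : x ∈ closure Ω) {p : E → E →L[ℝ] ℝ}
    (hpc : ContinuousWithinAt p (closure Ω) x)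
    (hp : ∀ᶠ y in 𝓝[closure Ω] x, HasFDerivWithinAt u (p y) (closure Ω) y)
    {l : E →L[ℝ] ℝ} (hl : HasFDerivWithinAt (fun _ => (0 : ℝ)) l (closure Ω) x)
    {w : E} (hw : l w ≠ 0) : p x w = 0 := by
  have hnhds : ∀ y ∈ Ω, closure Ω ∈ 𝓝 y := fun y hy =>
    mem_of_superset (hΩ.mem_nhds hy) subset_closure
  have hxΩ : x ∉ Ω := fun hxΩ => hw <| by
    rw [(hl.hasFDerivAt (hnhds x hxΩ)).unique (hasFDerivAt_const 0 x), zero_apply]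
  by_contra hne
  have hgood : ∀ᶠ y in 𝓝 x, y ∈ closure Ω →
      p y w ≠ 0 ∧ HasFDerivWithinAt u (p y) (closure Ω) y :=
    eventually_nhdsWithin_iff.1
      (((hpc.clm_apply continuousWithinAt_const).eventually_ne hne).and hp)
  have := mem_closure_iff_nhdsWithin_neBot.1 hx
  have hmono : 𝓝[Ω] x ≤ 𝓝[closure Ω] x := nhdsWithin_mono x subset_closure
  obtain ⟨y, hyΩ, hchord, hpos, hneg⟩ := (eventually_mem_nhdsWithin.and
    (((eventually_forall_chord_mem hgood w).filter_mono nhdsWithin_le_nhds).and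
      (((eventually_add_norm_smul_notMem hl hw).filter_mono hmono).and
        ((eventually_add_norm_smul_notMem hl (w := -w) (by simpa using hw)).filter_mono
          hmono)))).exists
  have hyx : y ≠ x := fun h => hxΩ (h ▸ hyΩ)
  obtain ⟨s, hs, hsΩ, hextr⟩ := exists_isLocalExtr_of_chord hΩ hu huc hyΩ (norm_nonneg (y - x))
    (hpos hyx) (by simpa only [smul_neg, neg_smul] using hneg hyx)
  obtain ⟨hps, hderiv⟩ := hchord s hs (subset_closure hsΩ)
  have hline : HasDerivAt (fun r : ℝ => y + r • w) w s := by
    simpa using ((hasDerivAt_id s).smul_const w).const_add y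
  exact hps (hextr.hasDerivAt_eq_zero
    ((hderiv.hasFDerivAt (hnhds _ hsΩ)).comp_hasDerivAt s hline))

lemma eq_zero_of_forall_apply_eq_zero_of_apply_ne_zero {p l : E →L[ℝ] ℝ} (hl : l ≠ 0)
    (h : ∀ w, l w ≠ 0 → p w = 0) : p = 0 := by
  obtain ⟨w, hw⟩ := DFunLike.ne_iff.1 hl
  ext v
  by_cases hv : l v = 0
  · have hvw : p (v + w) = 0 := h _ (by simpa [hv] using hw)
    simpa [h w hw] using hvw
  · exact h v hv

lemma fderivWithin_closure_eq (hΩ : IsOpen Ω) (hu : ContinuousOn u (closure Ω))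
    (huc : ∀ x ∈ frontier Ω, u x = c) {x : E} (hx : x ∈ closure Ω) {p : E → E →L[ℝ] ℝ}
    (hpc : ContinuousWithinAt p (closure Ω) x)
    (hp : ∀ᶠ y in 𝓝[closure Ω] x, HasFDerivWithinAt u (p y) (closure Ω) y) :
    fderivWithin ℝ u (closure Ω) x = p x := by
  by_contra hne
  have hpx : HasFDerivWithinAt u (p x) (closure Ω) x := hp.self_of_nhdsWithin hx
  have hl : HasFDerivWithinAt (fun _ => (0 : ℝ)) (fderivWithin ℝ u (closure Ω) x - p x)
      (closure Ω) x := by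
    simpa using hpx.differentiableWithinAt.hasFDerivWithinAt.fun_sub hpx
  have hp0 : p x = 0 := eq_zero_of_forall_apply_eq_zero_of_apply_ne_zero (sub_ne_zero.2 hne)
    fun w hw => apply_eq_zero_of_hasFDerivWithinAt_zero hΩ hu huc hx hpc hp hl hw
  -- Among several derivatives within a set, `fderivWithin` selects `0` whenever `0` is one.
  have h0 : fderivWithin ℝ u (closure Ω) x = 0 := by rw [fderivWithin, if_pos (hp0 ▸ hpx)]
  exact hne (h0.trans hp0.symm)

lemma continuousOn_fderivWithin_closure (hΩ : IsOpen Ω) (hu : ContDiffOn ℝ 1 u (closure Ω))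
    (huc : ∀ x ∈ frontier Ω, u x = c) :
    ContinuousOn (fderivWithin ℝ u (closure Ω)) (closure Ω) := by
  intro x hx
  obtain ⟨v, hv, -, -, p, hpv, hp⟩ :=
    (contDiffWithinAt_succ_iff_hasFDerivWithinAt' (n := 0) (by simp)).1 (by simpa using hu x hx)
  have hpev := hp.eventually (by simp)
  rw [insert_eq_of_mem hx] at hv hpev
  have hderiv : ∀ᶠ y in 𝓝[closure Ω] x, HasFDerivWithinAt u (p y) (closure Ω) y :=
    mem_of_superset hv hpv
  have heq : fderivWithin ℝ u (closure Ω) =ᶠ[𝓝[closure Ω] x] p := by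
    filter_upwards [eventually_eventually_nhdsWithin.2 hderiv, hpev, self_mem_nhdsWithin]
      with y hy hpy hyΩ
    exact fderivWithin_closure_eq hΩ hu.continuousOn huc hyΩ hpy.continuousWithinAt hy
  exact hp.continuousWithinAt.congr_of_eventuallyEq heq (heq.self_of_nhdsWithin hx)

end BoundaryGradient

section Hessian

variable {E : Type*} [NormedAddCommGroup E] [InnerProductSpace ℝ E] [CompleteSpace E]
  {f : E → ℝ} {x : E}

lemma contDiffAt_gradient {m n : WithTop ℕ∞} (hf : ContDiffAt ℝ n f x) (hmn : m + 1 ≤ n) :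
    ContDiffAt ℝ m (∇ f) x :=
  (toDual ℝ E).symm.contDiff.contDiffAt.comp x (hf.fderiv_right hmn)

lemma inner_fderiv_gradient (hf : ContDiffAt ℝ 2 f x) (y z : E) :
    ⟪fderiv ℝ (∇ f) x y, z⟫_ℝ = fderiv ℝ (fderiv ℝ f) x y z := by
  have hdf : DifferentiableAt ℝ (fderiv ℝ f) x :=
    (hf.fderiv_right (m := 1) (by norm_num)).differentiableAt one_ne_zero
  have hgrad := (toDual ℝ E).symm.toContinuousLinearEquiv.hasFDerivAt.comp x hdf.hasFDerivAt
  rw [show fderiv ℝ (∇ f) x = _ from hgrad.fderiv]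
  exact toDual_symm_apply

lemma isSymmetric_fderiv_gradient (hf : ContDiffAt ℝ 2 f x) :
    (fderiv ℝ (∇ f) x).IsSymmetric := fun y z => by
  have hsymm : IsSymmSndFDerivAt ℝ f x := hf.isSymmSndFDerivAt (by simp)
  rw [ContinuousLinearMap.coe_coe, inner_fderiv_gradient hf, real_inner_comm,
    inner_fderiv_gradient hf, hsymm y z]

lemma deriv_deriv_comp_line (hf : ContDiffAt ℝ 2 f x) (y : E) :
    deriv (deriv fun t : ℝ => f (x + t • y)) 0 = ⟪fderiv ℝ (∇ f) x y, y⟫_ℝ := by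
  have hline (t : ℝ) : HasDerivAt (fun t : ℝ => x + t • y) y t := by
    simpa using ((hasDerivAt_id t).smul_const y).const_add x
  have hx : x + (0 : ℝ) • y = x := by simp
  have hdf : HasFDerivAt (fderiv ℝ f) (fderiv ℝ (fderiv ℝ f) x) (x + (0 : ℝ) • y) := by
    rw [hx]
    exact ((hf.fderiv_right (m := 1) (by norm_num)).differentiableAt one_ne_zero).hasFDerivAt
  have hfirst : (deriv fun t : ℝ => f (x + t • y)) =ᶠ[𝓝 0] fun t => fderiv ℝ f (x + t • y) y := by
    have hC2 : ∀ᶠ z in 𝓝 (x + (0 : ℝ) • y), ContDiffAt ℝ 2 f z := by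
      rw [hx]
      exact hf.eventually (by simp)
    filter_upwards [(hline 0).continuousAt.eventually hC2] with t ht
    exact ((ht.differentiableAt two_ne_zero).hasFDerivAt.comp_hasDerivAt t (hline t)).deriv
  rw [hfirst.deriv_eq, inner_fderiv_gradient hf]
  have hsecond : HasDerivAt (fun t : ℝ => fderiv ℝ f (x + t • y)) (fderiv ℝ (fderiv ℝ f) x y) 0 :=
    hdf.comp_hasDerivAt 0 (hline 0)
  simpa using (hsecond.clm_apply (hasDerivAt_const 0 y)).deriv

lemma deriv_deriv_nonpos_of_isLocalMax_s3 {g : ℝ → ℝ} {t : ℝ} (h : IsLocalMax g t)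
    (hg : ContinuousAt g t) : deriv (deriv g) t ≤ 0 := by
  by_contra! hpos
  have hmin := isLocalMin_of_deriv_deriv_pos hpos h.deriv_eq_zero hg
  have hconst : g =ᶠ[𝓝 t] fun _ => g t := by
    filter_upwards [h, hmin] with s hs_le hs_ge using le_antisymm hs_le hs_ge
  rw [hconst.deriv.deriv_eq] at hpos
  simp at hpos

lemma isPositive_neg_fderiv_gradient_of_isLocalMax (h : IsLocalMax f x)
    (hf : ContDiffAt ℝ 2 f x) : (-fderiv ℝ (∇ f) x).IsPositive := by
  refine (ContinuousLinearMap.isPositive_iff _).2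
    ⟨fun y z => by simpa using isSymmetric_fderiv_gradient hf y z, fun y => ?_⟩
  have hline : ContinuousAt (fun t : ℝ => x + t • y) 0 := by fun_prop
  have hmax : IsLocalMax (fun t : ℝ => f (x + t • y)) 0 :=
    IsLocalMax.comp_continuous (g := fun t : ℝ => x + t • y) (by simpa using h) hline
  have hcont : ContinuousAt (fun t : ℝ => f (x + t • y)) 0 :=
    ContinuousAt.comp (by simpa using hf.continuousAt) hline
  have hsecond := deriv_deriv_nonpos_of_isLocalMax_s3 hmax hcont
  rw [deriv_deriv_comp_line hf] at hsecond
  simpa using hsecond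

end Hessian

section MaximumPrinciple

variable {E : Type*} [NormedAddCommGroup E] [InnerProductSpace ℝ E] [FiniteDimensional ℝ E]

lemma trace_comp_nonneg {A S : E →L[ℝ] E} (hA : ∀ y, 0 ≤ ⟪A y, y⟫_ℝ) (hS : S.IsPositive) :
    0 ≤ LinearMap.trace ℝ E (A ∘L S : E →L[ℝ] E) := by
  obtain ⟨m, v, rfl⟩ := ContinuousLinearMap.isPositive_iff_eq_sum_rankOne.1 hS
  have htrace : LinearMap.trace ℝ E (A ∘L ∑ i, rankOne ℝ (v i) (v i) : E →L[ℝ] E)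
      = ∑ i, ⟪A (v i), v i⟫_ℝ := by
    simp only [ContinuousLinearMap.comp_finsetSum, comp_rankOne,
      ContinuousLinearMap.toLinearMap_sum, map_sum, trace_rankOne, real_inner_comm]
  exact htrace ▸ Finset.sum_nonneg fun i _ => hA (v i)

/-- The linear second-order operator `w ↦ tr (A D²w) + b ⬝ ∇w` at `x`, the Hessian `D²w` being
encoded as the derivative of the gradient. The coefficients `A` and `b` are those at `x`. -/
noncomputable def secondOrderOp (A : E →L[ℝ] E) (b : E →L[ℝ] ℝ) (w : E → ℝ) (x : E) : ℝ :=
  LinearMap.trace ℝ E (A ∘L fderiv ℝ (∇ w) x : E →L[ℝ] E) + b (∇ w x)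

variable {A : E →L[ℝ] E} {b : E →L[ℝ] ℝ} {w φ : E → ℝ} {x : E}

lemma secondOrderOp_nonpos_of_isLocalMax (hA : ∀ y, 0 ≤ ⟪A y, y⟫_ℝ) (hw : ContDiffAt ℝ 2 w x)
    (hmax : IsLocalMax w x) : secondOrderOp A b w x ≤ 0 := by
  have hgrad : ∇ w x = 0 := by simp [gradient, hmax.fderiv_eq_zero]
  have htrace := trace_comp_nonneg hA (isPositive_neg_fderiv_gradient_of_isLocalMax hmax hw)
  rw [secondOrderOp, hgrad, map_zero, add_zero]
  simpa using htrace

lemma secondOrderOp_add_const_mul (hw : ContDiffAt ℝ 2 w x) (hφ : ContDiffAt ℝ 2 φ x) (η : ℝ) :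
    secondOrderOp A b (fun y => w y + η * φ y) x
      = secondOrderOp A b w x + η * secondOrderOp A b φ x := by
  have hgrad : ∇ (fun y => w y + η * φ y) =ᶠ[𝓝 x] fun y => ∇ w y + η • ∇ φ y := by
    filter_upwards [hw.eventually (by simp), hφ.eventually (by simp)] with y hwy hφy
    have hwy' := hwy.differentiableAt two_ne_zero
    have hφy' := hφy.differentiableAt two_ne_zero
    simp only [gradient]
    rw [fderiv_fun_add hwy' (hφy'.const_mul η), fderiv_const_mul hφy', map_add, map_smul]
  have hgw := (contDiffAt_gradient (m := 1) hw (by norm_num)).differentiableAt one_ne_zero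
  have hgφ := (contDiffAt_gradient (m := 1) hφ (by norm_num)).differentiableAt one_ne_zero
  rw [secondOrderOp, hgrad.fderiv_eq, hgrad.self_of_nhds, fderiv_fun_add hgw (hgφ.fun_const_smul η),
    fderiv_fun_const_smul hgφ]
  simp only [secondOrderOp, ContinuousLinearMap.comp_add, ContinuousLinearMap.comp_smul,
    ContinuousLinearMap.toLinearMap_add, ContinuousLinearMap.toLinearMap_smul, map_add, map_smul,
    smul_eq_mul]
  ring

lemma secondOrderOp_exp (e : E) (r : ℝ) :
    secondOrderOp A b (fun y => Real.exp (r * ⟪e, y⟫_ℝ)) x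
      = Real.exp (r * ⟪e, x⟫_ℝ) * r * (r * ⟪A e, e⟫_ℝ + b e) := by
  have hderiv (y : E) : HasFDerivAt (fun y => Real.exp (r * ⟪e, y⟫_ℝ))
      ((Real.exp (r * ⟪e, y⟫_ℝ) * r) • innerSL ℝ e) y := by
    simpa [smul_smul] using ((innerSL ℝ e).hasFDerivAt.const_mul r).exp
  have hgrad : ∇ (fun y => Real.exp (r * ⟪e, y⟫_ℝ))
      = fun y => (Real.exp (r * ⟪e, y⟫_ℝ) * r) • e := by
    funext y
    exact ext_inner_right ℝ fun z => by simp [(hderiv y).fderiv, inner_smul_left]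
  have hhess : fderiv ℝ (fun y => (Real.exp (r * ⟪e, y⟫_ℝ) * r) • e) x
      = (Real.exp (r * ⟪e, x⟫_ℝ) * r * r) • rankOne ℝ e e := by
    rw [(((hderiv x).mul_const r).smul_const e).fderiv]
    ext y
    simp only [ContinuousLinearMap.smulRight_apply, smul_apply, rankOne_apply,
      innerSL_apply_apply, smul_eq_mul]
    module
  rw [secondOrderOp, hgrad, hhess, ContinuousLinearMap.comp_smul, comp_rankOne,
    ContinuousLinearMap.toLinearMap_smul, map_smul, map_smul, trace_rankOne,
    real_inner_comm (A e) e, smul_eq_mul, smul_eq_mul]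
  ring

lemma exists_lt_forall_lt_of_forall_lt {X : Type*} [TopologicalSpace X] {S : Set X}
    (hS : IsCompact S) {f : X → ℝ} (hf : ContinuousOn f S) {a : ℝ} (h : ∀ x ∈ S, f x < a) :
    ∃ m < a, ∀ x ∈ S, f x < m := by
  obtain ⟨m, hm, hmS⟩ := hS.exists_forall_le' (a := -a) hf.neg fun x hx => neg_lt_neg (h x hx)
  obtain ⟨m', hm', hm'a⟩ := exists_between (neg_lt.1 hm)
  exact ⟨m', hm'a, fun x hx => (le_neg.1 (hmS x hx)).trans_lt hm'⟩

lemma exists_pos_forall_pos_mul_add {X : Type*} [TopologicalSpace X] {S : Set X} (hS : IsCompact S)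
    {α β : X → ℝ} (hα : ContinuousOn α S) (hβ : ContinuousOn β S) (hpos : ∀ x ∈ S, 0 < α x) :
    ∃ r > 0, ∀ x ∈ S, 0 < r * α x + β x := by
  obtain ⟨C, hC⟩ := hS.exists_bound_of_continuousOn (hβ.div hα fun x hx => (hpos x hx).ne')
  refine ⟨|C| + 1, by positivity, fun x hx => ?_⟩
  have hαx := hpos x hx
  have hβx : -C * α x ≤ β x := by
    rw [← le_div_iff₀ hαx]
    exact neg_le_of_abs_le (hC x hx)
  nlinarith [le_abs_self C]

lemma exists_contDiff_forall_secondOrderOp_pos [Nontrivial E] {S : Set E} (hS : IsCompact S)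
    {A : E → E →L[ℝ] E} (hAc : ContinuousOn A S) (hA : ∀ x ∈ S, ∀ y ≠ 0, 0 < ⟪A x y, y⟫_ℝ)
    {b : E → E →L[ℝ] ℝ} (hb : ContinuousOn b S) :
    ∃ φ : E → ℝ, ContDiff ℝ 2 φ ∧ ∀ x ∈ S, 0 < secondOrderOp (A x) (b x) φ x := by
  obtain ⟨e, he⟩ := exists_ne (0 : E)
  obtain ⟨r, hr, hrS⟩ := exists_pos_forall_pos_mul_add hS
    ((hAc.clm_apply continuousOn_const).inner continuousOn_const)
    (hb.clm_apply continuousOn_const) fun x hx => hA x hx e he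
  refine ⟨fun y => Real.exp (r * ⟪e, y⟫_ℝ), (contDiff_const.mul (innerSL ℝ e).contDiff).exp,
    fun x hx => ?_⟩
  rw [secondOrderOp_exp]
  have := hrS x hx
  positivity

lemma exists_isMaxOn_add_const_mul {X : Type*} [TopologicalSpace X] {K : Set X} (hK : IsCompact K)
    {w φ : X → ℝ} (hw : ContinuousOn w K) (hφ : ContinuousOn φ K) {x₀ : X} (hx₀ : x₀ ∈ K)
    {m : ℝ} (hm : m < w x₀) :
    ∃ η > 0, ∃ x ∈ K, m ≤ w x ∧ IsMaxOn (fun y => w y + η * φ y) K x := by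
  obtain ⟨D, hD⟩ := hK.exists_bound_of_continuousOn hφ
  have hD₀ : 0 ≤ D := (norm_nonneg _).trans (hD x₀ hx₀)
  obtain ⟨η, hη, hηD⟩ : ∃ η > 0, η * (2 * D) ≤ w x₀ - m := by
    refine ⟨(w x₀ - m) / (2 * D + 1), div_pos (by linarith) (by positivity), ?_⟩
    rw [div_mul_eq_mul_div, div_le_iff₀ (by positivity)]
    gcongr
    linarith
  obtain ⟨x, hxK, hx⟩ := hK.exists_isMaxOn ⟨x₀, hx₀⟩ (hw.add (hφ.const_mul η))
  refine ⟨η, hη, x, hxK, ?_, hx⟩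
  have hmax : w x₀ + η * φ x₀ ≤ w x + η * φ x := hx hx₀
  have hosc : φ x - φ x₀ ≤ 2 * D := by
    linarith [le_of_abs_le (hD x hxK), neg_le_of_abs_le (hD x₀ hx₀)]
  linarith [mul_le_mul_of_nonneg_left hosc hη.le]

variable {Ω : Set E}

-- Perturb `w` by a small multiple of a strict subsolution.
theorem exists_mem_frontier_isMaxOn_of_secondOrderOp_nonneg [Nontrivial E] (hΩ : IsOpen Ω)
    (hΩb : Bornology.IsBounded Ω) (hΩne : Ω.Nonempty) (hwc : ContinuousOn w (closure Ω))
    (hw : ContDiffOn ℝ 2 w Ω) {A : E → E →L[ℝ] E} (hAc : ContinuousOn A Ω)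
    (hA : ∀ x ∈ Ω, ∀ y ≠ 0, 0 < ⟪A x y, y⟫_ℝ) {b : E → E →L[ℝ] ℝ} (hb : ContinuousOn b Ω)
    (hLw : ∀ x ∈ Ω, 0 ≤ secondOrderOp (A x) (b x) w x) :
    ∃ y ∈ frontier Ω, IsMaxOn w (closure Ω) y := by
  have hK : IsCompact (closure Ω) := hΩb.isCompact_closure
  obtain ⟨x₀, hx₀, hmax⟩ := hK.exists_isMaxOn hΩne.closure hwc
  by_contra! hno
  have hfr : ∀ y ∈ frontier Ω, w y < w x₀ := by
    intro y hy
    refine (hmax (frontier_subset_closure hy)).lt_of_ne fun heq => hno y hy ?_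
    exact fun z hz => (hmax hz).trans_eq heq.symm
  obtain ⟨m, hm, hfrm⟩ := exists_lt_forall_lt_of_forall_lt
    (hK.of_isClosed_subset isClosed_frontier frontier_subset_closure)
    (hwc.mono frontier_subset_closure) hfr
  set S := closure Ω ∩ w ⁻¹' Ici m
  have hS : IsCompact S := hK.of_isClosed_subset
    (hwc.preimage_isClosed_of_isClosed isClosed_closure isClosed_Ici) inter_subset_left
  have hSΩ : S ⊆ Ω := fun x hx => by
    by_contra hxΩ
    exact (hfrm x ⟨hx.1, hΩ.interior_eq.symm ▸ hxΩ⟩).not_ge hx.2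
  obtain ⟨φ, hφ, hφpos⟩ := exists_contDiff_forall_secondOrderOp_pos hS (hAc.mono hSΩ)
    (fun x hx => hA x (hSΩ hx)) (hb.mono hSΩ)
  obtain ⟨η, hη, x, hx, hmx, hxmax⟩ :=
    exists_isMaxOn_add_const_mul hK hwc hφ.continuous.continuousOn hx₀ hm
  have hxΩ : x ∈ Ω := hSΩ ⟨hx, hmx⟩
  have hwx : ContDiffAt ℝ 2 w x := hw.contDiffAt (hΩ.mem_nhds hxΩ)
  have hnonpos := secondOrderOp_nonpos_of_isLocalMax (A := A x) (b := b x)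
    (fun y => by
      rcases eq_or_ne y 0 with rfl | hy
      · simp
      · exact (hA x hxΩ y hy).le)
    (hwx.add (contDiffAt_const.mul hφ.contDiffAt))
    (hxmax.isLocalMax (mem_of_superset (hΩ.mem_nhds hxΩ) subset_closure))
  rw [secondOrderOp_add_const_mul hwx hφ.contDiffAt] at hnonpos
  linarith [hLw x hxΩ, mul_pos hη (hφpos x ⟨hx, hmx⟩)]

end MaximumPrinciple

section Linearization

variable {E : Type*} [NormedAddCommGroup E] [InnerProductSpace ℝ E] [FiniteDimensional ℝ E]

variable (E) in
/-- The trace as a continuous linear functional on the continuous endomorphisms of `E`. -/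
noncomputable def traceCLM : (E →L[ℝ] E) →L[ℝ] ℝ :=
  LinearMap.toContinuousLinearMap (LinearMap.trace ℝ E ∘ₗ ContinuousLinearMap.coeLM ℝ)

@[simp]
lemma traceCLM_apply (T : E →L[ℝ] E) : traceCLM E T = LinearMap.trace ℝ E T := rfl

/-- The drift `q ↦ tr ((DA(G) q) DG) - Dg(G) q` at `x` of the linear equation satisfied by the
components of `G` when `tr (A(G) DG) = g(G)`. -/
noncomputable def linearizedDrift (A : E → E →L[ℝ] E) (g : E → ℝ) (G : E → E) (x : E) :
    E →L[ℝ] ℝ :=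
  traceCLM E ∘L (ContinuousLinearMap.compL ℝ E E E).flip (fderiv ℝ G x) ∘L fderiv ℝ A (G x)
    - fderiv ℝ g (G x)

variable {A : E → E →L[ℝ] E} {g : E → ℝ} {G : E → E} {x : E}

lemma gradient_inner_const (hG : DifferentiableAt ℝ G x) (hsymm : (fderiv ℝ G x).IsSymmetric)
    (e : E) : ∇ (fun y => ⟪G y, e⟫_ℝ) x = fderiv ℝ G x e := by
  have hderiv := hG.hasFDerivAt.inner ℝ (hasFDerivAt_const e x)
  refine ext_inner_right ℝ fun z => ?_
  rw [inner_gradient_left, hderiv.fderiv]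
  simpa [real_inner_comm] using hsymm z e

lemma fderiv_gradient_inner_const (hG : ContDiffAt ℝ 2 G x)
    (hsymm : ∀ᶠ y in 𝓝 x, (fderiv ℝ G y).IsSymmetric) (e : E) :
    fderiv ℝ (∇ fun y => ⟪G y, e⟫_ℝ) x = fderiv ℝ (fderiv ℝ G) x e := by
  have hgrad : (∇ fun y => ⟪G y, e⟫_ℝ) =ᶠ[𝓝 x] fun y => fderiv ℝ G y e := by
    filter_upwards [hG.eventually (by simp), hsymm] with y hGy hy
    exact gradient_inner_const (hGy.differentiableAt two_ne_zero) hy e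
  have hDG : DifferentiableAt ℝ (fderiv ℝ G) x :=
    (hG.fderiv_right (m := 1) (by norm_num)).differentiableAt one_ne_zero
  have hsnd : IsSymmSndFDerivAt ℝ G x := hG.isSymmSndFDerivAt (by simp)
  ext z
  rw [hgrad.fderiv_eq, fderiv_clm_apply hDG (differentiableAt_const e)]
  simpa using hsnd z e

lemma secondOrderOp_linearizedDrift_inner_const (hA : DifferentiableAt ℝ A (G x))
    (hg : DifferentiableAt ℝ g (G x)) (hG : ContDiffAt ℝ 2 G x)
    (hsymm : ∀ᶠ y in 𝓝 x, (fderiv ℝ G y).IsSymmetric)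
    (heq : ∀ᶠ y in 𝓝 x, LinearMap.trace ℝ E (A (G y) ∘L fderiv ℝ G y : E →L[ℝ] E) = g (G y))
    (e : E) :
    secondOrderOp (A (G x)) (linearizedDrift A g G x) (fun y => ⟪G y, e⟫_ℝ) x = 0 := by
  have hGx := (hG.differentiableAt two_ne_zero).hasFDerivAt
  have hDG : HasFDerivAt (fderiv ℝ G) (fderiv ℝ (fderiv ℝ G) x) x :=
    ((hG.fderiv_right (m := 1) (by norm_num)).differentiableAt one_ne_zero).hasFDerivAt
  have htrace := (traceCLM E).hasFDerivAt.comp x ((hA.hasFDerivAt.comp x hGx).clm_comp hDG)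
  have hderiv := DFunLike.congr_fun
    (htrace.unique ((hg.hasFDerivAt.comp x hGx).congr_of_eventuallyEq heq)) e
  rw [secondOrderOp, fderiv_gradient_inner_const hG hsymm,
    gradient_inner_const hGx.differentiableAt hsymm.self_of_nhds]
  simp only [linearizedDrift, Function.comp_apply, ContinuousLinearMap.comp_add, add_apply,
    sub_apply, ContinuousLinearMap.comp_apply, ContinuousLinearMap.compL_apply,
    ContinuousLinearMap.flip_apply, traceCLM_apply,
    ContinuousLinearMap.toLinearMap_comp] at hderiv ⊢
  linarith

variable {Ω : Set E}

lemma continuousOn_linearizedDrift (hΩ : IsOpen Ω) (hA : ContDiff ℝ 1 A) (hg : ContDiff ℝ 1 g)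
    (hG : ContDiffOn ℝ 2 G Ω) : ContinuousOn (linearizedDrift A g G) Ω := by
  have hDG : ContinuousOn (fderiv ℝ G) Ω := hG.continuousOn_fderiv_of_isOpen hΩ (by norm_num)
  have hDA : ContinuousOn (fun x => fderiv ℝ A (G x)) Ω :=
    (hA.continuous_fderiv one_ne_zero).comp_continuousOn hG.continuousOn
  have hDg : ContinuousOn (fun x => fderiv ℝ g (G x)) Ω :=
    (hg.continuous_fderiv one_ne_zero).comp_continuousOn hG.continuousOn
  exact (continuousOn_const.clm_comp
    (((ContinuousLinearMap.compL ℝ E E E).flip.continuous.comp_continuousOn hDG).clm_comp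
      hDA)).sub hDg

theorem exists_mem_frontier_isMaxOn_norm [Nontrivial E] (hΩ : IsOpen Ω)
    (hΩb : Bornology.IsBounded Ω) (hΩne : Ω.Nonempty) (hGc : ContinuousOn G (closure Ω))
    (hG : ContDiffOn ℝ 2 G Ω) (hsymm : ∀ x ∈ Ω, (fderiv ℝ G x).IsSymmetric)
    (hA : ContDiff ℝ 1 A) (hApos : ∀ p, ∀ y ≠ 0, 0 < ⟪A p y, y⟫_ℝ) (hg : ContDiff ℝ 1 g)
    (heq : ∀ x ∈ Ω, LinearMap.trace ℝ E (A (G x) ∘L fderiv ℝ G x : E →L[ℝ] E) = g (G x)) :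
    ∃ y ∈ frontier Ω, IsMaxOn (fun x => ‖G x‖) (closure Ω) y := by
  obtain ⟨x, hx, hxmax⟩ := hΩb.isCompact_closure.exists_isMaxOn hΩne.closure hGc.norm
  obtain ⟨y, hy, hymax⟩ := exists_mem_frontier_isMaxOn_of_secondOrderOp_nonneg hΩ hΩb hΩne
    (hGc.inner continuousOn_const) (hG.inner ℝ contDiffOn_const)
    (hA.continuous.comp_continuousOn hG.continuousOn) (fun z _ => hApos (G z))
    (continuousOn_linearizedDrift hΩ hA hg hG)
    fun z hz => (secondOrderOp_linearizedDrift_inner_const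
      (hA.differentiable one_ne_zero _) (hg.differentiable one_ne_zero _)
      (hG.contDiffAt (hΩ.mem_nhds hz)) (eventually_of_mem (hΩ.mem_nhds hz) hsymm)
      (eventually_of_mem (hΩ.mem_nhds hz) heq) (G x)).ge
  have hinner : ‖G x‖ * ‖G x‖ ≤ ‖G y‖ * ‖G x‖ :=
    calc ‖G x‖ * ‖G x‖ = ⟪G x, G x⟫_ℝ := (real_inner_self_eq_norm_mul_norm _).symm
      _ ≤ ⟪G y, G x⟫_ℝ := hymax hx
      _ ≤ ‖G y‖ * ‖G x‖ := real_inner_le_norm _ _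
  have hxy : ‖G x‖ ≤ ‖G y‖ := by
    rcases (norm_nonneg (G x)).eq_or_lt with hzero | hpos
    · exact hzero.symm.trans_le (norm_nonneg _)
    · exact le_of_mul_le_mul_right hinner hpos
  exact ⟨y, hy, fun z hz => (hxmax hz).trans hxy⟩

end Linearization

section Flux

variable {E : Type*} [NormedAddCommGroup E] {ε : ℝ}

lemma sq_add_norm_sq_pos (hε : ε ≠ 0) (p : E) : 0 < ε ^ 2 + ‖p‖ ^ 2 := by positivity

lemma norm_le_sSup_one_add_sqrt {X : Type*} {f : X → E} {s t : Set X} (hst : s ⊆ t)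
    (h : ∃ y ∈ s, IsMaxOn (fun x => ‖f x‖) t y) {x : X} (hx : x ∈ t) :
    ‖f x‖ ≤ sSup ((fun y => 1 + √(ε ^ 2 + ‖f y‖ ^ 2)) '' s) := by
  obtain ⟨y, hys, hy⟩ := h
  have hmax : ∀ z ∈ t, ‖f z‖ ≤ ‖f y‖ := hy
  have hbdd : BddAbove ((fun z => 1 + √(ε ^ 2 + ‖f z‖ ^ 2)) '' s) := by
    refine ⟨1 + √(ε ^ 2 + ‖f y‖ ^ 2), ?_⟩
    rintro _ ⟨z, hz, rfl⟩
    have := hmax z (hst hz)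
    dsimp only
    gcongr
  calc ‖f x‖ ≤ ‖f y‖ := hmax x hx
    _ ≤ √(ε ^ 2 + ‖f y‖ ^ 2) := Real.le_sqrt_of_sq_le (le_add_of_nonneg_left (sq_nonneg ε))
    _ ≤ 1 + √(ε ^ 2 + ‖f y‖ ^ 2) := le_add_of_nonneg_left zero_le_one
    _ ≤ _ := le_csSup hbdd (mem_image_of_mem _ hys)

variable [InnerProductSpace ℝ E]

lemma contDiff_neg_rpow_sq_add_norm_sq {n : WithTop ℕ∞} (hε : ε ≠ 0) (a : ℝ) :
    ContDiff ℝ n fun p : E => -((ε ^ 2 + ‖p‖ ^ 2) ^ a) :=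
  ((contDiff_const.add (contDiff_norm_sq ℝ)).rpow_const_of_ne
    fun p => (sq_add_norm_sq_pos hε p).ne').neg

/-- The flux `p ↦ p / √(ε² + |p|²)` whose divergence along `∇u` is the left-hand side of
`(★★)_ε`. -/
noncomputable def flux (ε : ℝ) (p : E) : E := (√(ε ^ 2 + ‖p‖ ^ 2))⁻¹ • p

lemma contDiff_flux {n : WithTop ℕ∞} (hε : ε ≠ 0) : ContDiff ℝ n (flux ε : E → E) := by
  have hsq : ContDiff ℝ n fun p : E => ε ^ 2 + ‖p‖ ^ 2 := contDiff_const.add (contDiff_norm_sq ℝ)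
  exact ((hsq.sqrt fun p => (sq_add_norm_sq_pos hε p).ne').inv
    fun p => (Real.sqrt_pos.2 (sq_add_norm_sq_pos hε p)).ne').smul contDiff_id

lemma fderiv_flux_apply (hε : ε ≠ 0) (p y : E) :
    fderiv ℝ (flux ε) p y = (√(ε ^ 2 + ‖p‖ ^ 2))⁻¹ • y
      - ((√(ε ^ 2 + ‖p‖ ^ 2))⁻¹ ^ 3 * ⟪p, y⟫_ℝ) • p := by
  have hpos := sq_add_norm_sq_pos hε p
  have hsq : HasFDerivAt (fun p : E => ε ^ 2 + ‖p‖ ^ 2) (2 • innerSL ℝ p) p :=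
    (hasStrictFDerivAt_norm_sq p).hasFDerivAt.const_add _
  have hs : 0 < √(ε ^ 2 + ‖p‖ ^ 2) := Real.sqrt_pos.2 hpos
  have hflux := ((hasDerivAt_inv hs.ne').comp_hasFDerivAt p (hsq.sqrt hpos.ne')).smul
    (hasFDerivAt_id p)
  rw [show fderiv ℝ (flux ε) p = _ from hflux.fderiv]
  simp only [Function.comp_apply, id_eq, add_apply, smul_apply,
    ContinuousLinearMap.smulRight_apply, ContinuousLinearMap.id_apply, innerSL_apply_apply,
    smul_eq_mul, nsmul_eq_mul, sub_eq_add_neg, ← neg_smul]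
  congr 2
  field_simp
  norm_num

lemma inner_fderiv_flux_pos (hε : ε ≠ 0) (p y : E) (hy : y ≠ 0) :
    0 < ⟪fderiv ℝ (flux ε) p y, y⟫_ℝ := by
  have hpos := sq_add_norm_sq_pos hε p
  rw [fderiv_flux_apply hε]
  set s := √(ε ^ 2 + ‖p‖ ^ 2)
  have hs : 0 < s := Real.sqrt_pos.2 hpos
  have hsq : s ^ 2 = ε ^ 2 + ‖p‖ ^ 2 := Real.sq_sqrt hpos.le
  have hcs : ⟪p, y⟫_ℝ ^ 2 ≤ ‖p‖ ^ 2 * ‖y‖ ^ 2 := by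
    rw [← mul_pow, ← sq_abs]
    gcongr
    exact abs_real_inner_le_norm p y
  have hεy : 0 < ε ^ 2 * ‖y‖ ^ 2 := by positivity
  calc 0 < s⁻¹ ^ 3 * (s ^ 2 * ‖y‖ ^ 2 - ⟪p, y⟫_ℝ ^ 2) :=
        mul_pos (by positivity) (by rw [hsq]; linarith)
    _ = ⟪s⁻¹ • y - (s⁻¹ ^ 3 * ⟪p, y⟫_ℝ) • p, y⟫_ℝ := by
        rw [inner_sub_left, real_inner_smul_left, real_inner_smul_left, real_inner_self_eq_norm_sq]
        field_simp

end Flux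

section GradientEstimate

variable {E : Type*} [NormedAddCommGroup E] [InnerProductSpace ℝ E] {Ω : Set E} {u : E → ℝ}

lemma gradientWithin_closure_eventuallyEq_gradient [CompleteSpace E] (hΩ : IsOpen Ω) {x : E}
    (hx : x ∈ Ω) : gradientWithin u (closure Ω) =ᶠ[𝓝 x] ∇ u := by
  filter_upwards [hΩ.mem_nhds hx] with y hy
  have hy' : closure Ω ∈ 𝓝 y := mem_of_superset (hΩ.mem_nhds hy) subset_closure
  rw [gradientWithin, gradient, fderivWithin_of_mem_nhds hy']

theorem interior_gradient_estimate_general [FiniteDimensional ℝ E] [Nontrivial E]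
    (hΩ : IsOpen Ω) (hΩb : Bornology.IsBounded Ω) (hΩne : Ω.Nonempty) {c : ℝ}
    (hu : ContDiffOn ℝ 3 u Ω) (hu₁ : ContDiffOn ℝ 1 u (closure Ω))
    (huc : ∀ x ∈ frontier Ω, u x = c) {F : E → E} (hF : ContDiff ℝ 2 F)
    (hFpos : ∀ p, ∀ y ≠ 0, 0 < ⟪fderiv ℝ F p y, y⟫_ℝ) {g : E → ℝ} (hg : ContDiff ℝ 1 g)
    (heq : ∀ x ∈ Ω, LinearMap.trace ℝ E
      (fderiv ℝ (fun y => F (gradientWithin u (closure Ω) y)) x : E →ₗ[ℝ] E)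
        = g (gradientWithin u (closure Ω) x)) :
    ∃ y ∈ frontier Ω, IsMaxOn (fun x => ‖gradientWithin u (closure Ω) x‖) (closure Ω) y := by
  have hgrad {x : E} (hx : x ∈ Ω) := gradientWithin_closure_eventuallyEq_gradient (u := u) hΩ hx
  have hcontDiffAt {x : E} (hx : x ∈ Ω) : ContDiffAt ℝ 2 (gradientWithin u (closure Ω)) x :=
    (contDiffAt_gradient (hu.contDiffAt (hΩ.mem_nhds hx)) (by norm_num)).congr_of_eventuallyEq
      (hgrad hx)
  refine exists_mem_frontier_isMaxOn_norm (A := fderiv ℝ F) hΩ hΩb hΩne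
    ((toDual ℝ E).symm.continuous.comp_continuousOn (continuousOn_fderivWithin_closure hΩ hu₁ huc))
    (fun x hx => (hcontDiffAt hx).contDiffWithinAt) (fun x hx => ?_)
    (hF.fderiv_right (by norm_num)) hFpos hg fun x hx => ?_
  · rw [(hgrad hx).fderiv_eq]
    exact isSymmetric_fderiv_gradient
      ((hu.contDiffAt (hΩ.mem_nhds hx)).of_le (by norm_num))
  · rw [← heq x hx, ← fderiv_comp x (hF.differentiable two_ne_zero _)
      ((hcontDiffAt hx).differentiableAt two_ne_zero)]
    rfl

end GradientEstimate

/-- **Interior gradient estimate** (Lemma 3.2, flat ambient space): for any solution `u` of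
`(★★)_ε` one has `sup_Ω |∇u| ≤ sup_{∂Ω} (1 + √(ε² + |∇u|²))`, the gradient on `∂Ω`
denoting the continuous extension of the gradient of `u`. -/
theorem interior_gradient_estimate (n : ℕ) (hn : 1 ≤ n) (k : ℝ) (hk : 1 ≤ k)
    (ε : ℝ) (hε : ε ∈ Ioc (0 : ℝ) 1)
    (Ω : Set (EuclideanSpace ℝ (Fin (n + 1)))) (hΩo : IsOpen Ω)
    (hΩb : Bornology.IsBounded Ω)
    (u : EuclideanSpace ℝ (Fin (n + 1)) → ℝ)
    (hu : IsRegularizedSolution n k ε Ω u) :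
    ∀ x ∈ Ω, ‖gradC Ω u x‖ ≤
      sSup ((fun y => 1 + Real.sqrt (ε ^ 2 + ‖gradC Ω u y‖ ^ 2)) '' frontier Ω) :=
  fun x hx => norm_le_sSup_one_add_sqrt frontier_subset_closure
    (interior_gradient_estimate_general hΩo hΩb ⟨x, hx⟩
      ((hu.1.mono subset_closure).of_le ENat.LEInfty.out) (hu.1.of_le ENat.LEInfty.out) hu.2.2
      (contDiff_flux hε.1.ne') (inner_fderiv_flux_pos hε.1.ne')
      (contDiff_neg_rpow_sq_add_norm_sq hε.1.ne' _) hu.2.1) (subset_closure hx)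
end
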